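/- Let p ∈ ℕ and let e : ℝ^p → V be a linear map such that B(e(v), e(v)) > 0 for every v ≠ 0. Then for every t ∈ [0,1] the linear map ρ_t ∘ e also satisfies B(ρ_t(e(v)), ρ_t(e(v))) > 0 for every v ≠ 0; in particular ρ_t ∘ e is injective for every t ∈ [0,1]. -/

import Mathlib

/-- The Picard–Lefschetz type linear map `ρ_t : α ↦ α + t·B(α,s)·s`. -/
noncomputable def rho {V : Type*} [AddCommGroup V] [Module ℝ V]
    (B : V →ₗ[ℝ] V →ₗ[ℝ] ℝ) (s : V) (t : ℝ) : V →ₗ[ℝ] V :=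
  LinearMap.id + (t • B.flip s).smulRight s

/-- if `e : ℝ^p → V` is linear with `B(e v, e v) > 0` for all `v ≠ 0`,
then for every `t ∈ [0,1]` the map `ρ_t ∘ e` has the same positivity property;
in particular `ρ_t ∘ e` is injective for every `t ∈ [0,1]`. -/
theorem rho_comp_positive_embedding {V : Type*} [AddCommGroup V] [Module ℝ V]
    (B : V →ₗ[ℝ] V →ₗ[ℝ] ℝ) (hB : ∀ x y : V, B x y = B y x)
    (s : V) (hs : B s s = -2)
    (p : ℕ) (e : (Fin p → ℝ) →ₗ[ℝ] V)
    (he : ∀ v : Fin p → ℝ, v ≠ 0 → 0 < B (e v) (e v)) :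
    ∀ t ∈ Set.Icc (0 : ℝ) 1,
      (∀ v : Fin p → ℝ, v ≠ 0 →
        0 < B ((rho B s t ∘ₗ e) v) ((rho B s t ∘ₗ e) v)) ∧
      Function.Injective (rho B s t ∘ₗ e) := by
  rintro t ⟨ht0, ht1⟩
  have hpos : ∀ v : Fin p → ℝ, v ≠ 0 →
      0 < B ((rho B s t ∘ₗ e) v) ((rho B s t ∘ₗ e) v) := by
    intro v hv
    -- Since `B s s = -2`, the square of `ρ_t α` exceeds that of `α` by `2t(1 - t) B(α, s)²`,
    -- which is nonnegative exactly because `t ∈ [0, 1]`.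
    have key : B ((rho B s t ∘ₗ e) v) ((rho B s t ∘ₗ e) v)
        = B (e v) (e v) + 2 * (t * (1 - t)) * B (e v) s ^ 2 := by
      simp [rho, hs, hB s (e v)]
      ring
    have h1 : 0 ≤ t * (1 - t) := mul_nonneg ht0 (sub_nonneg.2 ht1)
    have h2 := he v hv
    rw [key]
    positivity
  refine ⟨hpos, (injective_iff_map_eq_zero _).2 fun v hv => ?_⟩
  by_contra hne
  have h := hpos v hne
  rw [hv] at h
  simp at h
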